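/- Let A₁ and A₂ be deterministic parity automata over Σ with n₁ and n₂ states, respectively, and let L₁ = L(A₁) and L₂ = L(A₂). Then at least one of the following holds: (1) there is a deterministic Büchi automaton with at most 2·n₁·n₂ states whose language separates (L₁, L₂); (2) there is a DBW-sep-refuter for (L₁, L₂) with at most 2·n₁·n₂ states. -/

import Mathlib

/-!
The dichotomy is Landweber's criterion for deterministic Büchi recognizability, adapted to
separation, and read off the product automaton `P` with its two colorings `a` and `b`.

Call a pair of states `u`, `v` of `P` a *pattern* (`Pattern`) if `u` is reachable and `a u`, `b v`
are odd, there is a cycle through `u` on which `a ≤ a u` and `b ≤ b v`, and `u`, `v` reach each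
other through states with `b ≤ b v`.

If there is no pattern, make a state accepting when it lies in no `b`-odd strongly connected set,
that is, when it has no `BWit`. A run accepted by `b` is eventually inside one `b`-odd strongly
connected set, so it is rejected. If a run accepted by `a` had only finitely many accepting
states, then all its recurrent states would have `b`-witnesses; the witness of maximal `b`-color
together with the dominating `a`-odd state would be a pattern (`separates_of_no_pattern`). The
resulting Büchi automaton is `P` itself, with `n₁ * n₂` states.

If there is a pattern, a refuter (`refuter`) remembers the current state of `P` and one bit. With
the bit off it heads for `u` and then cycles through `u`; an `acc` turns the bit on, and then it
heads for `v` inside `b ≤ b v`, turning the bit off on arrival. All legs are memoryless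
(`exists_strategy`). With finitely many `acc` the output ends in the cycle of `u`; with infinitely
many, `v` recurs and dominates `b`. The memory state "bit on, at `v`" is never used, so it serves
as the initial state, which is needed because the environment moves first.
-/

structure DetAuto (α : Type) where
  Q : Type
  [fin : Fintype Q]
  init : Q
  δ : Q → α → Q

attribute [instance] DetAuto.fin

/-- The run of a deterministic automaton on an infinite word. -/
def DetAuto.run {α : Type} (M : DetAuto α) (x : ℕ → α) : ℕ → M.Q
  | 0 => M.init
  | n + 1 => M.δ (M.run x n) (x n)

/-- Parity acceptance: the maximal color occurring infinitely often in the run is odd. -/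
def ParityAccept {α : Type} (M : DetAuto α) (c : M.Q → ℕ) (x : ℕ → α) : Prop :=
  ∃ m, Odd m ∧ (∃ᶠ n in Filter.atTop, c (M.run x n) = m) ∧
    ∀ m', (∃ᶠ n in Filter.atTop, c (M.run x n) = m') → m' ≤ m

/-- A language is ω-regular iff it is recognized by some deterministic parity automaton. -/
def OmegaRegular {α : Type} (L : Set (ℕ → α)) : Prop :=
  ∃ (M : DetAuto α) (c : M.Q → ℕ), ∀ x, x ∈ L ↔ ParityAccept M c x

/-- A language is DBW-recognizable iff some deterministic Büchi automaton recognizes it. -/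
def DBWRecognizable {α : Type} (L : Set (ℕ → α)) : Prop :=
  ∃ (M : DetAuto α) (acc : Set M.Q), ∀ x, x ∈ L ↔ ∃ᶠ n in Filter.atTop, M.run x n ∈ acc

/-- An (A/α)-transducer: reads letters of `A`, outputs letters of `α`. -/
structure Transducer (A α : Type) where
  S : Type
  [fin : Fintype S]
  init : S
  ρ : S → A → S
  τ : S → α

attribute [instance] Transducer.fin

def Transducer.run {A α : Type} (T : Transducer A α) (y : ℕ → A) : ℕ → T.S
  | 0 => T.init
  | n + 1 => T.ρ (T.run y n) (y n)

/-- Output with environment initiation: output letter `j` is emitted at state `s_{j+1}`. -/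
def Transducer.out {A α : Type} (T : Transducer A α) (y : ℕ → A) : ℕ → α :=
  fun j => T.τ (T.run y (j + 1))

/-- `(L₁, L₂)` is DBW-separable: some DBW-recognizable language contains `L₁` and is
disjoint from `L₂`. -/
def DBWSeparable {α : Type} (L₁ L₂ : Set (ℕ → α)) : Prop :=
  ∃ L : Set (ℕ → α), DBWRecognizable L ∧ L₁ ⊆ L ∧ L ∩ L₂ = ∅

/-- A DBW-sep-refuter for `(L₁, L₂)` (`true` = acc): for every input `y`, either the
output is in `L₁` and `y` has finitely many acc's, or the output is in `L₂` and `y` has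
infinitely many acc's. -/
def DBWSepRefuter {α : Type} (L₁ L₂ : Set (ℕ → α)) (R : Transducer Bool α) : Prop :=
  ∀ y : ℕ → Bool,
    (R.out y ∈ L₁ ∧ {j | y j = true}.Finite) ∨
    (R.out y ∈ L₂ ∧ ¬ {j | y j = true}.Finite)

open Filter Relation

/-- The sequence `r` satisfies the parity condition of `c`, stated through a dominating recurrent
state instead of a dominating recurrent color. -/
def OddDom {Q : Type} (c : Q → ℕ) (r : ℕ → Q) : Prop :=
  ∃ v, Odd (c v) ∧ (∃ᶠ n in atTop, r n = v) ∧ ∀ᶠ n in atTop, c (r n) ≤ c v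

lemma eventually_recurrent {Q : Type} [Finite Q] (r : ℕ → Q) :
    ∀ᶠ n in atTop, ∃ᶠ k in atTop, r k = r n := by
  have h : ∀ q : Q, ∀ᶠ n in atTop, r n = q → ∃ᶠ k in atTop, r k = q := by
    intro q
    by_cases hq : ∃ᶠ k in atTop, r k = q
    · exact Eventually.of_forall fun _ _ => hq
    · exact (not_frequently.1 hq).mono fun n hn h' => absurd h' hn
  filter_upwards [eventually_all.2 h] with n hn using hn _ rfl

lemma oddDom_iff {Q : Type} [Finite Q] (c : Q → ℕ) (r : ℕ → Q) :
    (∃ m, Odd m ∧ (∃ᶠ n in atTop, c (r n) = m) ∧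
      ∀ m', (∃ᶠ n in atTop, c (r n) = m') → m' ≤ m) ↔ OddDom c r := by
  have hrec := eventually_recurrent r
  constructor
  · rintro ⟨m, hm, hf, hmax⟩
    obtain ⟨n, hn, hn'⟩ := (hf.and_eventually hrec).exists
    refine ⟨r n, by rwa [hn], hn', ?_⟩
    filter_upwards [hrec] with k hk
    rw [hn]
    exact hmax _ (hk.mono fun j hj => by rw [hj])
  · rintro ⟨v, hv, hf, he⟩
    refine ⟨c v, hv, hf.mono fun n hn => by rw [hn], fun m' hm' => ?_⟩
    obtain ⟨n, hn, hn'⟩ := (hm'.and_eventually he).exists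
    omega

/-! ### Paths in an automaton -/

section Paths

variable {Sig : Type} (P : DetAuto Sig)

/-- One transition of `P` whose target, but not necessarily its source, lies in `T`. -/
def Edge (T : Set P.Q) (p q : P.Q) : Prop := ∃ s, P.δ p s = q ∧ q ∈ T

lemma Edge.mono {T T' : Set P.Q} (h : T ⊆ T') {p q : P.Q} (hp : TransGen (Edge P T) p q) :
    TransGen (Edge P T') p q :=
  TransGen.mono (fun _ _ ⟨s, hs, hT⟩ => ⟨s, hs, h hT⟩) _ _ hp

lemma run_path (T : Set P.Q) (x : ℕ → Sig) {i j : ℕ} (hij : i < j)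
    (h : ∀ k, i < k → k ≤ j → P.run x k ∈ T) : TransGen (Edge P T) (P.run x i) (P.run x j) := by
  induction j, hij using Nat.le_induction with
  | base => exact TransGen.single ⟨x i, rfl, h _ (by omega) (by omega)⟩
  | succ j hj ih =>
    exact (ih fun k h1 h2 => h k h1 (by omega)).tail ⟨x j, rfl, h _ (by omega) (by omega)⟩

/-- A path with exactly `n + 1` transitions from `q` to `u` whose states after `q` lie in `T`. -/
def PathLen (T : Set P.Q) (u : P.Q) : ℕ → P.Q → Prop
  | 0, q => Edge P T q u
  | n + 1, q => ∃ s, P.δ q s ∈ T ∧ PathLen T u n (P.δ q s)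

lemma PathLen.transGen {T : Set P.Q} {u : P.Q} :
    ∀ {n : ℕ} {q : P.Q}, PathLen P T u n q → TransGen (Edge P T) q u
  | 0, _, h => TransGen.single h
  | _ + 1, _, ⟨s, hs, h⟩ => TransGen.head ⟨s, rfl, hs⟩ h.transGen

lemma exists_pathLen {T : Set P.Q} {u q : P.Q} (h : TransGen (Edge P T) q u) :
    ∃ n, PathLen P T u n q := by
  induction h using TransGen.head_induction_on with
  | single h => exact ⟨0, h⟩
  | head h _ ih =>
    obtain ⟨s, rfl, hs⟩ := h
    obtain ⟨n, hn⟩ := ih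
    exact ⟨n + 1, s, hs, hn⟩

/-- Memoryless reachability: following `f` from any state that has a nonempty path to `u` in `T`
stays in `T` and gets to `u`, since the distance `d` drops until `u` is met. -/
lemma exists_strategy [Nonempty Sig] (T : Set P.Q) (u : P.Q) :
    ∃ (f : P.Q → Sig) (d : P.Q → ℕ), ∀ q, TransGen (Edge P T) q u →
      P.δ q (f q) ∈ T ∧ (P.δ q (f q) = u ∨
        (TransGen (Edge P T) (P.δ q (f q)) u ∧ d (P.δ q (f q)) < d q)) := by
  classical
  have key : ∀ q, ∃ s, TransGen (Edge P T) q u →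
      P.δ q s ∈ T ∧ (P.δ q s = u ∨ (TransGen (Edge P T) (P.δ q s) u ∧
        sInf {n | PathLen P T u n (P.δ q s)} < sInf {n | PathLen P T u n q})) := by
    intro q
    by_cases hq : TransGen (Edge P T) q u
    · have hmem : PathLen P T u (sInf {n | PathLen P T u n q}) q :=
        Nat.sInf_mem (s := {n | PathLen P T u n q}) (exists_pathLen P hq)
      generalize sInf {n | PathLen P T u n q} = n at hmem
      cases n with
      | zero =>
        obtain ⟨s, hs, hT⟩ := hmem
        exact ⟨s, fun _ => ⟨hs ▸ hT, Or.inl hs⟩⟩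
      | succ n =>
        obtain ⟨s, hs, hn⟩ := hmem
        exact ⟨s, fun _ => ⟨hs, Or.inr ⟨hn.transGen, Nat.lt_succ_of_le (Nat.sInf_le hn)⟩⟩⟩
    · exact ⟨Classical.arbitrary Sig, fun h => absurd h hq⟩
  choose f hf using key
  exact ⟨f, fun q => sInf {n | PathLen P T u n q}, hf⟩

end Paths

/-- A decreasing rank forces the event `H`, strictly after `n`. -/
lemma eventually_hit (G H : ℕ → Prop) (d : ℕ → ℕ)
    (h : ∀ n, G n → H (n + 1) ∨ (G (n + 1) ∧ d (n + 1) < d n)) (n : ℕ) (hn : G n) :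
    ∃ k, n < k ∧ H k := by
  induction hd : d n using Nat.strong_induction_on generalizing n with
  | _ m ih =>
    rcases h n hn with h1 | ⟨h1, h2⟩
    · exact ⟨n + 1, by omega, h1⟩
    · obtain ⟨k, hk, hk'⟩ := ih _ (hd ▸ h2) (n + 1) h1 rfl
      exact ⟨k, by omega, hk'⟩

/-! ### The forbidden pattern and the separating automaton -/

section Core

variable {Sig : Type} (P : DetAuto Sig) (a b : P.Q → ℕ)

/-- An obstruction to separation: a reachable `a`-odd cycle through `u`, contained in the strongly
connected set of `v` in `{b ≤ b v}`, where `b v` is odd. -/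
structure Pattern (u v : P.Q) : Prop where
  oddA : Odd (a u)
  oddB : Odd (b v)
  reach : TransGen (Edge P Set.univ) P.init u
  cycle : TransGen (Edge P {q | a q ≤ a u ∧ b q ≤ b v}) u u
  there : TransGen (Edge P {q | b q ≤ b v}) u v
  back : TransGen (Edge P {q | b q ≤ b v}) v u

/-- `v` is `b`-odd and `q` lies in its strongly connected component in `{b ≤ b v}`. Empty paths
are allowed, so a state `q = v` on no cycle also counts. -/
def BWit (q v : P.Q) : Prop :=
  Odd (b v) ∧ b q ≤ b v ∧ ReflTransGen (Edge P {q | b q ≤ b v}) q v ∧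
    ReflTransGen (Edge P {q | b q ≤ b v}) v q

/-- A run accepted by `b` eventually stays in the strongly connected set of its dominating state. -/
lemma eventually_bWit (x : ℕ → Sig) (h : OddDom b (P.run x)) :
    ∀ᶠ n in atTop, ∃ v, BWit P b (P.run x n) v := by
  obtain ⟨v, hv, hf, he⟩ := h
  obtain ⟨N, hN⟩ := eventually_atTop.1 he
  obtain ⟨n₁, hn₁, hv₁⟩ := frequently_atTop.1 hf N
  filter_upwards [eventually_gt_atTop n₁] with n hn
  obtain ⟨n₂, hn₂, hv₂⟩ := frequently_atTop.1 hf (n + 1)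
  refine ⟨v, hv, hN n (by omega), ?_, ?_⟩
  · have := run_path P {q | b q ≤ b v} x (i := n) (j := n₂) (by omega)
      fun k _ _ => hN k (by omega)
    exact (hv₂ ▸ this).to_reflTransGen
  · have := run_path P {q | b q ≤ b v} x hn fun k _ _ => hN k (by omega)
    exact (hv₁ ▸ this).to_reflTransGen

/-- An `a`-accepted run all of whose late states have `b`-witnesses exhibits a pattern. -/
lemma exists_pattern (x : ℕ → Sig) (h : OddDom a (P.run x))
    (hB : ∀ᶠ n in atTop, ∃ v, BWit P b (P.run x n) v) : ∃ u v, Pattern P a b u v := by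
  obtain ⟨u, hu, hf, he⟩ := h
  obtain ⟨N, hN⟩ := eventually_atTop.1 (he.and (hB.and (eventually_recurrent (P.run x))))
  -- A witness of maximal `b`-color dominates the `b`-colors of all states after time `N`.
  obtain ⟨v, ⟨n₀, hn₀, hv⟩, hmax⟩ :=
    Set.exists_max_image {v | ∃ n, N ≤ n ∧ BWit P b (P.run x n) v} b (Set.toFinite _)
      (by obtain ⟨v, hv⟩ := (hN N le_rfl).2.1; exact ⟨v, N, le_rfl, hv⟩)
  have hb : ∀ n, N ≤ n → b (P.run x n) ≤ b v := by
    intro n hn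
    obtain ⟨w, hw⟩ := (hN n hn).2.1
    exact hw.2.1.trans (hmax w ⟨n, hn, hw⟩)
  obtain ⟨n₁, hn₁, hu₁⟩ := frequently_atTop.1 hf N
  obtain ⟨n₂, hn₂, hu₂⟩ := frequently_atTop.1 hf (n₁ + 1)
  obtain ⟨n₃, hn₃, hu₃⟩ := frequently_atTop.1 (hN n₀ hn₀).2.2 (n₁ + 1)
  obtain ⟨n₄, hn₄, hu₄⟩ := frequently_atTop.1 hf (n₀ + 1)
  refine ⟨u, v, hu, hv.1, ?_, ?_, ?_, ?_⟩
  · have := run_path P Set.univ x (i := 0) (j := n₂) (by omega) fun _ _ _ => trivial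
    rwa [hu₂] at this
  · have := run_path P {q | a q ≤ a u ∧ b q ≤ b v} x (i := n₁) (j := n₂) (by omega)
      fun k _ _ => ⟨(hN k (by omega)).1, hb k (by omega)⟩
    rwa [hu₂, hu₁] at this
  · have := run_path P {q | b q ≤ b v} x (i := n₁) (j := n₃) (by omega)
      fun k _ _ => hb k (by omega)
    rw [hu₁, hu₃] at this
    exact this.trans_left hv.2.2.1
  · have := run_path P {q | b q ≤ b v} x (i := n₀) (j := n₄) (by omega)
      fun k _ _ => hb k (by omega)
    rw [hu₄] at this
    exact TransGen.trans_right hv.2.2.2 this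

/-- Without patterns, the states having no `b`-witness form a separating Büchi condition. -/
lemma separates_of_no_pattern (h : ¬ ∃ u v, Pattern P a b u v) :
    ∃ acc : Set P.Q, ∀ x, (OddDom a (P.run x) → ∃ᶠ n in atTop, P.run x n ∈ acc) ∧
      (OddDom b (P.run x) → ¬ ∃ᶠ n in atTop, P.run x n ∈ acc) := by
  refine ⟨{q | ¬ ∃ v, BWit P b q v}, fun x => ⟨fun hx => ?_, fun hx => ?_⟩⟩
  · by_contra hc
    refine h (exists_pattern P a b x hx ?_)
    filter_upwards [not_frequently.1 hc] with n hn using not_not.1 hn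
  · rw [not_frequently]
    filter_upwards [eventually_bWit P b x hx] with n hn using not_not.2 hn

/-! ### The refuter -/

open Classical in
/-- The transducer playing `F m q` in memory `m` at state `q`. Memory is switched on by `acc`
and off by reaching `v`. The otherwise unreachable `(true, v)` is the initial state, from which
the first input, read before any output, leads to the initial state of `P`. -/
noncomputable def refuter (v : P.Q) (F : Bool → P.Q → Sig) : Transducer Bool Sig where
  S := Bool × P.Q
  init := (true, v)
  ρ s y := if s = (true, v) then (false, P.init) else
    (decide (P.δ s.2 (F s.1 s.2) ≠ v) && (s.1 || y), P.δ s.2 (F s.1 s.2))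
  τ s := F s.1 s.2

/-- Time is shifted by one: after the first input the memory of `refuter` follows `P`. -/
lemma refuter_run (v : P.Q) (F : Bool → P.Q → Sig) (y : ℕ → Bool) :
    ∃ m : ℕ → Bool,
      (∀ n, P.run ((refuter P v F).out y) (n + 1) =
        P.δ (P.run ((refuter P v F).out y) n) (F (m n) (P.run ((refuter P v F).out y) n))) ∧
      (∀ n, P.run ((refuter P v F).out y) n = v → m n = false) ∧
      (∀ n, P.run ((refuter P v F).out y) (n + 1) ≠ v → m (n + 1) = (m n || y (n + 1))) := by
  classical
  set R := refuter P v F with hR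
  set s : ℕ → Bool × P.Q := fun n => R.run y (n + 1) with hs
  have h0 : s 0 = (false, P.init) := if_pos rfl
  have hne : ∀ n, s n ≠ (true, v) := by
    intro n
    cases n with
    | zero => rw [h0]; simp
    | succ n =>
      change (if s n = (true, v) then (false, P.init) else _) ≠ _
      split_ifs
      · simp
      · intro h
        have h1 := congrArg Prod.fst h
        have h2 := congrArg Prod.snd h
        simp only at h1 h2
        simp [h2] at h1
  have hstep : ∀ n, s (n + 1) = (decide (P.δ (s n).2 (F (s n).1 (s n).2) ≠ v) &&
      ((s n).1 || y (n + 1)), P.δ (s n).2 (F (s n).1 (s n).2)) := fun n => if_neg (hne n)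
  have hrun : ∀ n, P.run (R.out y) n = (s n).2 := by
    intro n
    induction n with
    | zero => rw [h0]; rfl
    | succ n ih =>
      rw [hstep]
      change P.δ (P.run (R.out y) n) (F (s n).1 (s n).2) = _
      rw [ih]
  refine ⟨fun n => (s n).1, fun n => ?_, fun n hn => ?_, fun n hn => ?_⟩
  · rw [hrun, hrun, hstep]
  · rw [hrun] at hn
    by_contra hc
    exact hne n (Prod.ext (by simpa using hc) hn)
  · rw [hrun] at hn
    have h1 := congrArg Prod.fst (hstep n)
    have h2 := congrArg Prod.snd (hstep n)
    simp only at h1 h2 ⊢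
    rw [h1, ← h2]
    simp [hn]

/-- The strategy attached to a pattern refutes every Büchi condition. -/
lemma refutes_of_pattern {u v : P.Q} (h : Pattern P a b u v) :
    ∃ F : Bool → P.Q → Sig, ∀ y : ℕ → Bool,
      (OddDom a (P.run ((refuter P v F).out y)) ∧ {j | y j = true}.Finite) ∨
      (OddDom b (P.run ((refuter P v F).out y)) ∧ ¬ {j | y j = true}.Finite) := by
  classical
  have hSig : Nonempty Sig := by
    obtain ⟨_, ⟨s, _⟩, _⟩ := TransGen.head'_iff.1 h.cycle
    exact ⟨s⟩
  set S : Set P.Q := {q | b q ≤ b v} with hS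
  set T : Set P.Q := {q | a q ≤ a u ∧ b q ≤ b v} with hT
  have hTS : T ⊆ S := fun q hq => hq.2
  obtain ⟨f₀, d₀, hf₀⟩ := exists_strategy P Set.univ u
  obtain ⟨f₁, d₁, hf₁⟩ := exists_strategy P S u
  obtain ⟨f₂, d₂, hf₂⟩ := exists_strategy P T u
  obtain ⟨g, e, hg⟩ := exists_strategy P S v
  set G₁ : P.Q → Prop := fun q => TransGen (Edge P S) q u with hG₁
  set G₂ : P.Q → Prop := fun q => TransGen (Edge P T) q u with hG₂
  have hG₁u : G₁ u := Edge.mono P hTS h.cycle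
  have hG₂₁ : ∀ q, G₂ q → G₁ q := fun q => Edge.mono P hTS
  -- Outside the component of `v` go to `u`; inside it go to `v` if the memory is on, and
  -- otherwise to `u`, through `T` whenever possible.
  refine ⟨fun m q => if G₁ q then (if m then g q else if G₂ q then f₂ q else f₁ q) else f₀ q,
    fun y => ?_⟩
  set F : Bool → P.Q → Sig :=
    fun m q => if G₁ q then (if m then g q else if G₂ q then f₂ q else f₁ q) else f₀ q with hF
  obtain ⟨m, hr, hmv, hm⟩ := refuter_run P v F y
  set r := P.run ((refuter P v F).out y) with hrdef
  have hout : ∀ n, ¬ G₁ (r n) → r (n + 1) = P.δ (r n) (f₀ (r n)) := by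
    intro n hn; rw [hr]; simp [hF, hn]
  have hon : ∀ n, G₁ (r n) → m n = true → r (n + 1) = P.δ (r n) (g (r n)) := by
    intro n hn hm; rw [hr]; simp [hF, hn, hm]
  have hcyc : ∀ n, G₂ (r n) → m n = false → r (n + 1) = P.δ (r n) (f₂ (r n)) := by
    intro n hn hm; rw [hr]; simp [hF, hn, hm, hG₂₁ _ hn]
  have hoff : ∀ n, G₁ (r n) → ¬ G₂ (r n) → m n = false → r (n + 1) = P.δ (r n) (f₁ (r n)) := by
    intro n hn hn' hm; rw [hr]; simp [hF, hn, hm, hn']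
  have hV : ∀ q, G₁ q → TransGen (Edge P S) q v := fun q hq => hq.trans h.there
  -- The component of `v` is never left, and `r` stays in `S` from then on.
  have hstay : ∀ n, G₁ (r n) → G₁ (r (n + 1)) ∧ r (n + 1) ∈ S := by
    intro n hn
    cases hmn : m n with
    | true =>
      rw [hon n hn hmn]
      obtain ⟨h1, h2⟩ := hg _ (hV _ hn)
      refine ⟨?_, h1⟩
      rcases h2 with h2 | h2
      · rw [h2]; exact h.back
      · exact h2.1.trans h.back
    | false =>
      by_cases hn' : G₂ (r n)
      · rw [hcyc n hn' hmn]
        obtain ⟨h1, h2⟩ := hf₂ _ hn'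
        refine ⟨?_, hTS h1⟩
        rcases h2 with h2 | h2
        · rw [h2]; exact hG₁u
        · exact hG₂₁ _ h2.1
      · rw [hoff n hn hn' hmn]
        obtain ⟨h1, h2⟩ := hf₁ _ hn
        refine ⟨?_, h1⟩
        rcases h2 with h2 | h2
        · rw [h2]; exact hG₁u
        · exact h2.1
  obtain ⟨N, -, hN⟩ : ∃ k, 0 ≤ k ∧ G₁ (r k) := by
    by_cases h0 : G₁ (r 0)
    · exact ⟨0, le_rfl, h0⟩
    by_contra hc
    push Not at hc
    obtain ⟨k, -, hk⟩ := eventually_hit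
      (fun n => TransGen (Edge P Set.univ) (r n) u) (fun n => G₁ (r n)) (fun n => d₀ (r n))
      (fun n hn => by
        rw [hout n (hc n (Nat.zero_le _))]
        rcases (hf₀ _ hn).2 with h2 | h2
        · left; rw [h2]; exact hG₁u
        · exact Or.inr h2) 0 h.reach
    exact hc k (Nat.zero_le _) hk
  have hG : ∀ n, N ≤ n → G₁ (r n) := by
    intro n hn
    induction n, hn using Nat.le_induction with
    | base => exact hN
    | succ n _ ih => exact (hstay n ih).1
  have hb : ∀ᶠ n in atTop, b (r n) ≤ b v := by
    filter_upwards [eventually_gt_atTop N] with n hn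
    obtain ⟨k, rfl⟩ : ∃ k, n = k + 1 := ⟨n - 1, by omega⟩
    exact (hstay k (hG k (by omega))).2
  have hhitv : ∀ n, N ≤ n → m n = true → ∃ k, n < k ∧ r k = v := by
    intro n hn hmn
    refine eventually_hit (fun n => N ≤ n ∧ m n = true) (fun n => r n = v) (fun n => e (r n))
      (fun n ⟨hn, hmn⟩ => ?_) n ⟨hn, hmn⟩
    by_cases hv : r (n + 1) = v
    · exact Or.inl hv
    refine Or.inr ⟨⟨by omega, by rw [hm n hv, hmn]; rfl⟩, ?_⟩
    have he := (hg _ (hV _ (hG n hn))).2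
    rw [← hon n (hG n hn) hmn] at he
    rcases he with he | he
    · exact absurd he hv
    · exact he.2
  by_cases hfin : {j | y j = true}.Finite
  · refine Or.inl ⟨?_, hfin⟩
    obtain ⟨K, hK⟩ := hfin.bddAbove
    have hy : ∀ n, K < n → y n = false := by
      intro n hn
      by_contra hc
      have := hK (show n ∈ {j | y j = true} by simpa using hc)
      omega
    obtain ⟨n₁, hn₁, hm₁⟩ : ∃ n, max N K ≤ n ∧ m n = false := by
      cases hmn : m (max N K) with
      | false => exact ⟨_, le_rfl, hmn⟩
      | true =>
        obtain ⟨k, hk, hkv⟩ := hhitv _ (le_max_left _ _) hmn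
        exact ⟨k, hk.le, hmv k hkv⟩
    have hNn : N ≤ n₁ := (le_max_left _ _).trans hn₁
    have hKn : K ≤ n₁ := (le_max_right _ _).trans hn₁
    have hm0 : ∀ n, n₁ ≤ n → m n = false := by
      intro n hn
      induction n, hn using Nat.le_induction with
      | base => exact hm₁
      | succ n hn ih =>
        by_cases hv : r (n + 1) = v
        · exact hmv _ hv
        · rw [hm n hv, ih, hy _ (by omega)]; rfl
    obtain ⟨n₂, hn₂, hG2⟩ : ∃ k, n₁ ≤ k ∧ G₂ (r k) := by
      by_contra hc
      push Not at hc
      obtain ⟨k, hk, hk'⟩ := eventually_hit (fun n => n₁ ≤ n)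
        (fun n => n₁ ≤ n ∧ G₂ (r n)) (fun n => d₁ (r n))
        (fun n hn => by
          rw [hoff n (hG n (by omega)) (hc n hn) (hm0 n hn)]
          rcases (hf₁ _ (hG n (by omega))).2 with h2 | h2
          · left; rw [h2]; exact ⟨by omega, h.cycle⟩
          · exact Or.inr ⟨by omega, h2.2⟩) n₁ le_rfl
      exact hc k hk'.1 hk'.2
    have hstay₂ : ∀ n, n₂ ≤ n → G₂ (r n) := by
      intro n hn
      induction n, hn using Nat.le_induction with
      | base => exact hG2
      | succ n hn ih =>
        rw [hcyc n ih (hm0 n (by omega))]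
        rcases (hf₂ _ ih).2 with h2 | h2
        · rw [h2]; exact h.cycle
        · exact h2.1
    refine ⟨u, h.oddA, frequently_atTop.2 fun n => ?_, ?_⟩
    · obtain ⟨k, hk, hk'⟩ := eventually_hit (fun n => n₂ ≤ n) (fun n => r n = u)
        (fun n => d₂ (r n))
        (fun n hn => by
          rw [hcyc n (hstay₂ n hn) (hm0 n (by omega))]
          rcases (hf₂ _ (hstay₂ n hn)).2 with h2 | h2
          · exact Or.inl h2
          · exact Or.inr ⟨by omega, h2.2⟩) (max n n₂) (le_max_right _ _)
      exact ⟨k, (le_max_left _ _).trans hk.le, hk'⟩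
    · filter_upwards [eventually_gt_atTop n₂] with n hn
      obtain ⟨k, rfl⟩ : ∃ k, n = k + 1 := ⟨n - 1, by omega⟩
      rw [hcyc k (hstay₂ k (by omega)) (hm0 k (by omega))]
      exact (hf₂ _ (hstay₂ k (by omega))).1.1
  · refine Or.inr ⟨⟨v, h.oddB, frequently_atTop.2 fun n => ?_, hb⟩, hfin⟩
    obtain ⟨j, hj, hjn⟩ := (Set.infinite_of_not_bddAbove
      (fun hbd => hfin hbd.finite)).exists_gt (max n N)
    obtain ⟨k, rfl⟩ : ∃ k, j = k + 1 := ⟨j - 1, by omega⟩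
    have h1 : n ≤ k + 1 := (le_max_left _ _).trans hjn.le
    have h2 : N ≤ k + 1 := (le_max_right _ _).trans hjn.le
    by_cases hv : r (k + 1) = v
    · exact ⟨k + 1, h1, hv⟩
    · obtain ⟨i, hi, hi'⟩ := hhitv (k + 1) h2 (by
        rw [hm k hv, show y (k + 1) = true from hj, Bool.or_true])
      exact ⟨i, by omega, hi'⟩

end Core

/-- The synchronous product of two automata. -/
def prodAuto {Sig : Type} (M₁ M₂ : DetAuto Sig) : DetAuto Sig where
  Q := M₁.Q × M₂.Q
  init := (M₁.init, M₂.init)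
  δ q s := (M₁.δ q.1 s, M₂.δ q.2 s)

lemma prodAuto_run {Sig : Type} (M₁ M₂ : DetAuto Sig) (x : ℕ → Sig) (n : ℕ) :
    (prodAuto M₁ M₂).run x n = (M₁.run x n, M₂.run x n) := by
  induction n with
  | zero => rfl
  | succ n ih => simp only [DetAuto.run, ih]; rfl

/-- For DPWs with `n₁` and `n₂` states recognizing `L₁` and `L₂`: either some DBW with at
most `2·n₁·n₂` states recognizes a separator of `(L₁, L₂)`, or there is a DBW-sep-refuter
for `(L₁, L₂)` with at most `2·n₁·n₂` states. -/
theorem stmt_10 {Sig : Type} [Fintype Sig] (M₁ M₂ : DetAuto Sig)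
    (c₁ : M₁.Q → ℕ) (c₂ : M₂.Q → ℕ) (n₁ n₂ : ℕ)
    (hn₁ : Fintype.card M₁.Q = n₁) (hn₂ : Fintype.card M₂.Q = n₂)
    (L₁ L₂ : Set (ℕ → Sig))
    (hL₁ : ∀ x, x ∈ L₁ ↔ ParityAccept M₁ c₁ x)
    (hL₂ : ∀ x, x ∈ L₂ ↔ ParityAccept M₂ c₂ x) :
    (∃ (B : DetAuto Sig) (acc : Set B.Q) (L : Set (ℕ → Sig)),
        Fintype.card B.Q ≤ 2 * n₁ * n₂ ∧
        (∀ x, x ∈ L ↔ ∃ᶠ j in Filter.atTop, B.run x j ∈ acc) ∧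
        L₁ ⊆ L ∧ L ∩ L₂ = ∅) ∨
    (∃ R : Transducer Bool Sig, Fintype.card R.S ≤ 2 * n₁ * n₂ ∧ DBWSepRefuter L₁ L₂ R) := by
  set P := prodAuto M₁ M₂
  set a : P.Q → ℕ := fun q => c₁ q.1 with ha
  set b : P.Q → ℕ := fun q => c₂ q.2 with hb
  have hr : ∀ x n, P.run x n = (M₁.run x n, M₂.run x n) := prodAuto_run M₁ M₂
  have hA : ∀ x, x ∈ L₁ ↔ OddDom a (P.run x) := by
    intro x
    rw [hL₁, ← oddDom_iff]
    simp only [ParityAccept, ha, hr]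
  have hB : ∀ x, x ∈ L₂ ↔ OddDom b (P.run x) := by
    intro x
    rw [hL₂, ← oddDom_iff]
    simp only [ParityAccept, hb, hr]
  have hcard : Fintype.card P.Q = n₁ * n₂ := by
    rw [← hn₁, ← hn₂]
    exact Fintype.card_prod _ _
  by_cases hpat : ∃ u v, Pattern P a b u v
  · obtain ⟨u, v, huv⟩ := hpat
    obtain ⟨F, hF⟩ := refutes_of_pattern P a b huv
    refine Or.inr ⟨refuter P v F, ?_, fun y => ?_⟩
    · have : Fintype.card (refuter P v F).S = Fintype.card Bool * Fintype.card P.Q :=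
        Fintype.card_prod _ _
      rw [this, hcard, Fintype.card_bool, mul_assoc]
    · rw [hA, hB]
      exact hF y
  · obtain ⟨acc, hacc⟩ := separates_of_no_pattern P a b hpat
    refine Or.inl ⟨P, acc, {x | ∃ᶠ j in atTop, P.run x j ∈ acc}, ?_, fun x => Iff.rfl, ?_, ?_⟩
    · rw [hcard, mul_assoc]; omega
    · exact fun x hx => (hacc x).1 ((hA x).1 hx)
    · ext x
      simp only [Set.mem_inter_iff, Set.mem_empty_iff_false, iff_false, not_and]
      exact fun hx hx' => (hacc x).2 ((hB x).1 hx') hx
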